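/- Let A ≥ 0 and B > 0 be real numbers. For every real γ with γ > −1, the function value log(1+γ) − γ + (1+γ)·A/(A+B) is at most log(1 + A/B), and equality holds when γ = A/B. In particular, the maximum over γ of log(1+γ) − γ + (1+γ)A/(A+B) is attained at γ = A/B with maximal value log(1 + A/B). -/

import Mathlib

/-- Lemma 1 (Modified Lagrangian Dual Transform), single-ratio form: for `A ≥ 0`, `B > 0`,
the function `γ ↦ log (1 + γ) - γ + (1 + γ) * A / (A + B)` is at most `log (1 + A / B)`
for every `γ > -1`, with equality at `γ = A / B`. -/
theorem lagrangian_dual_transform (A B : ℝ) (hA : 0 ≤ A) (hB : 0 < B) :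
    (∀ γ : ℝ, γ > -1 →
      Real.log (1 + γ) - γ + (1 + γ) * A / (A + B) ≤ Real.log (1 + A / B)) ∧
    Real.log (1 + A / B) - A / B + (1 + A / B) * A / (A + B) = Real.log (1 + A / B) := by
  have hAB : 0 < A + B := by linarith
  constructor
  · intro γ hγ
    have h1 : 0 < 1 + γ := by linarith
    have h2 : 0 < 1 + A / B := by positivity
    have h := Real.log_le_sub_one_of_pos (div_pos h1 h2)
    rw [Real.log_div h1.ne' h2.ne'] at h
    have e : (1 + γ) / (1 + A / B) = (1 + γ) - (1 + γ) * A / (A + B) := by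
      have h3 : 1 + A / B = (A + B) / B := by field_simp; ring
      rw [h3]
      field_simp
      ring
    linarith
  · have e : (1 + A / B) * A / (A + B) = A / B := by
      have h3 : 1 + A / B = (A + B) / B := by field_simp; ring
      rw [h3]
      field_simp
    linarith
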